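/- Let n ≥ 2 and let μ be a Borel probability measure on 𝕋 invariant under ×n such that almost every ergodic component of μ with respect to ×n has positive measure-theoretic entropy. Then μ is N_n-recurrent. -/

import Mathlib

open MeasureTheory ENNReal

section Entropy

variable {α : Type*} [MeasurableSpace α]

/-- `P : Fin m → Set α` is a finite measurable partition of `α` modulo `μ`-null sets. -/
def IsFinMeasPartition (μ : Measure α) {m : ℕ} (P : Fin m → Set α) : Prop :=
  (∀ i, MeasurableSet (P i)) ∧ Pairwise (Function.onFun Disjoint P) ∧ μ (⋃ i, P i)ᶜ = 0

/-- Shannon entropy (information) of a finite family of sets with respect to `μ`. -/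
noncomputable def finPartitionEntropy (μ : Measure α) {ι : Type*} [Fintype ι]
    (P : ι → Set α) : ℝ≥0∞ :=
  ENNReal.ofReal (∑ i, Real.negMulLog ((μ (P i)).toReal))

/-- The common refinement `P ∨ T⁻¹ P ∨ ⋯ ∨ T^{-(n-1)} P`, indexed by `Fin n → Fin m`. -/
def refinedPartition (T : α → α) {m : ℕ} (P : Fin m → Set α) (n : ℕ) :
    (Fin n → Fin m) → Set α :=
  fun f => ⋂ i : Fin n, T^[(i : ℕ)] ⁻¹' P (f i)

/-- The measure-theoretic (Kolmogorov–Sinai) entropy `h_μ(T)` of a transformation `T`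
preserving `μ`, defined as the supremum over all finite measurable partitions `P` of
`inf_n H_μ(P ∨ T⁻¹P ∨ ⋯ ∨ T^{-n}P)/(n+1)` (by subadditivity this infimum equals the
usual limit). -/
noncomputable def ksEntropy (T : α → α) (μ : Measure α) : ℝ≥0∞ :=
  ⨆ (m : ℕ) (P : Fin m → Set α) (_ : IsFinMeasPartition μ P),
    ⨅ n : ℕ, finPartitionEntropy μ (refinedPartition T P (n + 1)) / (n + 1 : ℝ≥0∞)

end Entropy

open MeasureTheory

/-- The subgroup `N_n = { q/nᵏ mod 1 }` of `n`-adic rationals in `𝕋`. -/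
def nAdicRationals (n : ℕ) : Set UnitAddCircle :=
  {t | ∃ (k : ℕ) (q : ℤ), t = (((q : ℝ) / n ^ k : ℝ) : UnitAddCircle)}

/-- A Borel probability measure `μ` on `𝕋` is `N_n`-recurrent if for every Borel set
`B` of positive measure and `μ`-a.e. `x ∈ B` there are infinitely many `t ∈ N_n` with
`x + t ∈ B`. -/
def NnRecurrent (n : ℕ) (μ : Measure UnitAddCircle) : Prop :=
  ∀ B : Set UnitAddCircle, MeasurableSet B → 0 < μ B →
    ∀ᵐ x ∂μ, x ∈ B → {t : UnitAddCircle | t ∈ nAdicRationals n ∧ x + t ∈ B}.Infinite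

/-!
Fix an ergodic component `ρ` and let the weight `w x` be the conditional mass of `x` among the `n`
preimages of `n • x`. The mass of `x` in its fibre under the `k`-th iterate is the product
`∏ i < k, w (nⁱ x)`. If `E` meets each coset of `N_n` at most once, all iterates are injective on
`E`, and Cauchy–Schwarz for the transfer operator gives `(ρ E)² ≤ ∫_E ∏ i < k, w (nⁱ x) dρ`. When
`w` is not almost everywhere `1`, ergodicity makes these products tend to `0` almost everywhere, so
`ρ E = 0`. When `w = 1` almost everywhere, `ρ`-almost every point is determined by its image, so
each letter of a symbolic coding is approximately determined by finitely many later ones; by Fano's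
inequality the entropy then vanishes, which is excluded.

Integrating over the components, every such `E` is `μ`-null. A point of `B` with only finitely many
returns to `B` under `N_n` is isolated among them by a basic open set, hence lies in one of
countably many such sets `E`.
-/

section FiniteEntropy

open Finset

variable {ι κ : Type*}

lemma negMulLog_sum_le (s : Finset ι) {p : ι → ℝ} (hp : ∀ i ∈ s, 0 ≤ p i) :
    Real.negMulLog (∑ i ∈ s, p i) ≤ ∑ i ∈ s, Real.negMulLog (p i) := by
  rw [Real.negMulLog, ← sum_neg_distrib, sum_mul]
  refine sum_le_sum fun i hi => ?_
  rcases (hp i hi).eq_or_lt with h0 | hpos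
  · simp only [← h0, zero_mul, neg_zero, Real.negMulLog_zero, le_refl]
  · have hlog : Real.log (p i) ≤ Real.log (∑ j ∈ s, p j) :=
      Real.log_le_log hpos (single_le_sum hp hi)
    rw [Real.negMulLog]
    linarith [mul_le_mul_of_nonneg_left hlog hpos.le]

lemma sum_negMulLog_le_neg_sum_mul_log {s : Finset ι} {p q : ι → ℝ} (hp : ∀ i ∈ s, 0 ≤ p i)
    (hq : ∀ i ∈ s, 0 ≤ q i) (hpq : ∀ i ∈ s, q i = 0 → p i = 0)
    (hsum : ∑ i ∈ s, q i ≤ ∑ i ∈ s, p i) :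
    ∑ i ∈ s, Real.negMulLog (p i) ≤ -∑ i ∈ s, p i * Real.log (q i) := by
  have hterm : ∀ i ∈ s, Real.negMulLog (p i) ≤ -(p i * Real.log (q i)) + (q i - p i) := by
    intro i hi
    rcases (hp i hi).eq_or_lt with h0 | hpos
    · simpa [← h0] using hq i hi
    have hqpos : 0 < q i := (hq i hi).lt_of_ne' fun h => hpos.ne' (hpq i hi h)
    have hlog := mul_le_mul_of_nonneg_left
      (Real.log_le_sub_one_of_pos (div_pos hqpos hpos)) hpos.le
    rw [Real.log_div hqpos.ne' hpos.ne', mul_sub, mul_sub, mul_div_cancel₀ _ hpos.ne'] at hlog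
    rw [Real.negMulLog]
    linarith
  have := sum_le_sum hterm
  rw [sum_add_distrib, sum_neg_distrib, sum_sub_distrib] at this
  linarith

lemma one_lt_card_of_ne [Fintype ι] {a b : ι} (hab : a ≠ b) : (1 : ℝ) < Fintype.card ι :=
  mod_cast Fintype.one_lt_card_iff.2 ⟨a, b, hab⟩

lemma neg_sum_mul_log_marginal [Fintype ι] [Fintype κ] (p : ι × κ → ℝ) :
    -∑ z, p z * Real.log (∑ a, p (a, z.2)) = ∑ b, Real.negMulLog (∑ a, p (a, b)) := by
  simp only [Fintype.sum_prod_type_right, Real.negMulLog, ← sum_mul, sum_neg_distrib, neg_mul]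

variable [Fintype ι] [DecidableEq ι]

/-- The law, given the observation `b`, of a letter that is `G b` with probability `1 - e` and
otherwise uniform on the other letters: the reference distribution in Fano's inequality. The junk
value `e / 0` never occurs, since on a one-letter alphabet every letter is `G b`. -/
noncomputable def fanoKernel (G : κ → ι) (e : ℝ) (z : ι × κ) : ℝ :=
  if z.1 = G z.2 then 1 - e else e / (Fintype.card ι - 1)

lemma fanoKernel_of_eq {G : κ → ι} {e : ℝ} {z : ι × κ} (h : z.1 = G z.2) :
    fanoKernel G e z = 1 - e :=
  if_pos h

lemma fanoKernel_of_ne {G : κ → ι} {e : ℝ} {z : ι × κ} (h : z.1 ≠ G z.2) :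
    fanoKernel G e z = e / (Fintype.card ι - 1) :=
  if_neg h

lemma fanoKernel_nonneg (G : κ → ι) {e : ℝ} (he0 : 0 ≤ e) (he1 : e ≤ 1) (z : ι × κ) :
    0 ≤ fanoKernel G e z := by
  by_cases h : z.1 = G z.2
  · rw [fanoKernel_of_eq h]
    linarith
  · rw [fanoKernel_of_ne h]
    exact div_nonneg he0 (sub_nonneg.2 (one_lt_card_of_ne h).le)

lemma sum_fanoKernel_le_one (G : κ → ι) {e : ℝ} (he0 : 0 ≤ e) (b : κ) :
    ∑ a, fanoKernel G e (a, b) ≤ 1 := by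
  have hcard : ((#(univ.erase (G b)) : ℕ) : ℝ) = Fintype.card ι - 1 := by
    rw [card_erase_of_mem (mem_univ _), card_univ, Nat.cast_pred (Fintype.card_pos_iff.2 ⟨G b⟩)]
  have hwrong : ∑ a ∈ univ.erase (G b), fanoKernel G e (a, b) ≤ e := by
    rw [sum_congr rfl fun a ha => fanoKernel_of_ne (z := (a, b)) (ne_of_mem_erase ha), sum_const,
      nsmul_eq_mul, hcard]
    rcases eq_or_ne (Fintype.card ι - 1 : ℝ) 0 with h0 | h0
    · simpa [h0] using he0
    · rw [mul_div_cancel₀ _ h0]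
  rw [← add_sum_erase univ _ (mem_univ (G b)), fanoKernel_of_eq (z := (G b, b)) rfl]
  linarith

variable [Fintype κ] {p : ι × κ → ℝ} {G : κ → ι}

lemma eq_zero_of_fanoKernel_eq_zero (hp : ∀ z, 0 ≤ p z) (hp1 : ∑ z, p z = 1) {z : ι × κ}
    (hz : fanoKernel G (∑ z with z.1 ≠ G z.2, p z) z = 0) : p z = 0 := by
  have hsplit := sum_filter_add_sum_filter_not univ (fun z : ι × κ => z.1 = G z.2) p
  by_cases h : z.1 = G z.2
  · rw [fanoKernel_of_eq h] at hz
    have hright : ∑ z with z.1 = G z.2, p z = 0 := by linarith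
    exact (sum_eq_zero_iff_of_nonneg fun z _ => hp z).1 hright z (by simpa using h)
  · rw [fanoKernel_of_ne h, _root_.div_eq_zero_iff,
      or_iff_left (sub_pos.2 (one_lt_card_of_ne h)).ne'] at hz
    exact (sum_eq_zero_iff_of_nonneg fun z _ => hp z).1 hz z (by simpa using h)

lemma neg_sum_mul_log_fanoKernel (hp1 : ∑ z, p z = 1) :
    -∑ z, p z * Real.log (fanoKernel G (∑ z with z.1 ≠ G z.2, p z) z)
      = Real.qaryEntropy (Fintype.card ι) (∑ z with z.1 ≠ G z.2, p z) := by
  set e := ∑ z with z.1 ≠ G z.2, p z with he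
  have hsplit := sum_filter_add_sum_filter_not univ (fun z : ι × κ => z.1 = G z.2) p
  have hright : ∑ z with z.1 = G z.2, p z * Real.log (fanoKernel G e z)
      = (1 - e) * Real.log (1 - e) := by
    rw [sum_congr rfl fun z hz => by rw [fanoKernel_of_eq (by simpa using hz)], ← sum_mul]
    congr 1
    linarith
  have hwrong : ∑ z with z.1 ≠ G z.2, p z * Real.log (fanoKernel G e z)
      = e * (Real.log e - Real.log (Fintype.card ι - 1)) := by
    rw [sum_congr rfl fun z hz => by rw [fanoKernel_of_ne (by simpa using hz)], ← sum_mul, ← he]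
    rcases eq_or_ne e 0 with h0 | h0
    · simp only [h0, zero_mul]
    · obtain ⟨z, hz, -⟩ := exists_ne_zero_of_sum_ne_zero h0
      have hz : z.1 ≠ G z.2 := by simpa using hz
      rw [Real.log_div h0 (sub_pos.2 (one_lt_card_of_ne hz)).ne']
  rw [← sum_filter_add_sum_filter_not univ (fun z => z.1 = G z.2), hright, hwrong, Real.qaryEntropy,
    Real.binEntropy, Real.log_inv, Real.log_inv]
  push_cast
  ring

lemma sum_negMulLog_le_add_qaryEntropy (hp : ∀ z, 0 ≤ p z) (hp1 : ∑ z, p z = 1) (G : κ → ι) :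
    ∑ z, Real.negMulLog (p z) ≤ ∑ b, Real.negMulLog (∑ a, p (a, b))
      + Real.qaryEntropy (Fintype.card ι) (∑ z with z.1 ≠ G z.2, p z) := by
  set K := fanoKernel G (∑ z with z.1 ≠ G z.2, p z)
  set m : κ → ℝ := fun b => ∑ a, p (a, b)
  have he0 : 0 ≤ ∑ z with z.1 ≠ G z.2, p z := sum_nonneg fun z _ => hp z
  have he1 : ∑ z with z.1 ≠ G z.2, p z ≤ 1 := hp1 ▸ sum_le_univ_sum_of_nonneg hp
  have hm0 : ∀ b, 0 ≤ m b := fun b => sum_nonneg fun a _ => hp (a, b)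
  have hzero : ∀ z, m z.2 = 0 ∨ K z = 0 → p z = 0 := by
    rintro z (h | h)
    · exact (sum_eq_zero_iff_of_nonneg fun a _ => hp (a, z.2)).1 h z.1 (mem_univ _)
    · exact eq_zero_of_fanoKernel_eq_zero hp hp1 h
  have hmass : ∑ z, m z.2 * K z ≤ ∑ z, p z := by
    simp only [Fintype.sum_prod_type_right, ← mul_sum]
    exact sum_le_sum fun b _ => mul_le_of_le_one_right (hm0 b) (sum_fanoKernel_le_one G he0 b)
  have hlog : ∀ z, p z * Real.log (m z.2 * K z)
      = p z * Real.log (m z.2) + p z * Real.log (K z) := by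
    intro z
    by_cases h : m z.2 = 0 ∨ K z = 0
    · simp only [hzero z h, zero_mul, add_zero]
    · rw [not_or] at h
      rw [Real.log_mul h.1 h.2, mul_add]
  calc ∑ z, Real.negMulLog (p z) ≤ -∑ z, p z * Real.log (m z.2 * K z) :=
        sum_negMulLog_le_neg_sum_mul_log (fun z _ => hp z)
          (fun z _ => mul_nonneg (hm0 z.2) (fanoKernel_nonneg G he0 he1 z))
          (fun z _ h => hzero z (mul_eq_zero.1 h)) hmass
    _ = -∑ z, p z * Real.log (m z.2) + -∑ z, p z * Real.log (K z) := by
        simp only [hlog, sum_add_distrib, neg_add]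
    _ = _ := by rw [neg_sum_mul_log_marginal, neg_sum_mul_log_fanoKernel hp1]

end FiniteEntropy

section ShannonEntropy

open Finset

variable {Ω ι κ : Type*} [MeasurableSpace Ω] {ρ : Measure Ω}

/-- The Shannon entropy `H(X)`, in nats, of a map `X` with finitely many values. -/
noncomputable def shannonEntropy [Fintype ι] (ρ : Measure Ω) (X : Ω → ι) : ℝ :=
  ∑ a, Real.negMulLog (ρ.real (X ⁻¹' {a}))

variable [Fintype κ] [MeasurableSpace κ] [MeasurableSingletonClass κ]

lemma measureReal_comp_preimage_singleton [IsFiniteMeasure ρ] [DecidableEq ι] {Z : Ω → κ}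
    (hZ : Measurable Z) (g : κ → ι) (a : ι) :
    ρ.real ((g ∘ Z) ⁻¹' {a}) = ∑ b with g b = a, ρ.real (Z ⁻¹' {b}) := by
  rw [sum_measureReal_preimage_singleton _ fun b _ => hZ (measurableSet_singleton b)]
  congr 1
  ext x
  simp

lemma shannonEntropy_comp_le [IsFiniteMeasure ρ] [Fintype ι] {Z : Ω → κ} (hZ : Measurable Z)
    (g : κ → ι) : shannonEntropy ρ (g ∘ Z) ≤ shannonEntropy ρ Z := by
  classical
  rw [shannonEntropy, shannonEntropy, ← sum_fiberwise univ g]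
  refine sum_le_sum fun a _ => ?_
  rw [measureReal_comp_preimage_singleton hZ]
  exact negMulLog_sum_le _ fun _ _ => measureReal_nonneg

lemma shannonEntropy_comp_measurePreserving {Z : Ω → κ} (hZ : Measurable Z) {T : Ω → Ω}
    (hT : MeasurePreserving T ρ ρ) : shannonEntropy ρ (Z ∘ T) = shannonEntropy ρ Z :=
  sum_congr rfl fun b _ => congrArg Real.negMulLog <|
    hT.measureReal_preimage (hZ (measurableSet_singleton b)).nullMeasurableSet

/-- Fano's inequality: the function `G` is a guess of `X` from the observation `Y`. -/
lemma shannonEntropy_prodMk_le [IsProbabilityMeasure ρ] [Fintype ι] [MeasurableSpace ι]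
    [MeasurableSingletonClass ι] {X : Ω → ι} (hX : Measurable X) {Y : Ω → κ} (hY : Measurable Y)
    (G : κ → ι) :
    shannonEntropy ρ (fun x => (X x, Y x)) ≤ shannonEntropy ρ Y
      + Real.qaryEntropy (Fintype.card ι) (ρ.real {x | X x ≠ G (Y x)}) := by
  classical
  set Z : Ω → ι × κ := fun x => (X x, Y x)
  have hZ : Measurable Z := hX.prodMk hY
  have hmarginal (b : κ) : ∑ a, ρ.real (Z ⁻¹' {(a, b)}) = ρ.real (Y ⁻¹' {b}) := by
    rw [show Y = Prod.snd ∘ Z from rfl, measureReal_comp_preimage_singleton hZ, sum_filter,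
      Fintype.sum_prod_type]
    simp only [sum_ite_eq', mem_univ, if_true]
  have herror : ∑ z with z.1 ≠ G z.2, ρ.real (Z ⁻¹' {z}) = ρ.real {x | X x ≠ G (Y x)} := by
    rw [sum_measureReal_preimage_singleton _ fun z _ => hZ (measurableSet_singleton z)]
    congr 1
    ext x
    simp [Z]
  have htotal : ∑ z, ρ.real (Z ⁻¹' {z}) = 1 := by
    rw [sum_measureReal_preimage_singleton _ fun z _ => hZ (measurableSet_singleton z)]
    simp
  have hfano := sum_negMulLog_le_add_qaryEntropy (fun _ => measureReal_nonneg) htotal G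
  simp only [hmarginal, herror] at hfano
  exact hfano

end ShannonEntropy

section EntropyRate

open Filter

/-- The sequence of values of `q` along the `T`-orbit of a point. -/
def itinerary {Ω ι : Type*} (T : Ω → Ω) (q : Ω → ι) (x : Ω) (i : ℕ) : ι :=
  q (T^[i] x)

variable {Ω ι : Type*} [MeasurableSpace Ω] {ρ : Measure Ω} {T : Ω → Ω}

lemma measurable_itinerary [MeasurableSpace ι] (hT : Measurable T) {q : Ω → ι}
    (hq : Measurable q) : Measurable (itinerary T q) :=
  measurable_pi_lambda _ fun i => hq.comp (hT.iterate i)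

/-- The entropy of the first `N` letters of the `q`-itinerary. -/
noncomputable def blockEntropy [Fintype ι] (ρ : Measure Ω) (T : Ω → Ω) (q : Ω → ι) (N : ℕ) : ℝ :=
  shannonEntropy ρ fun x (i : Fin N) => itinerary T q x i

/-- Up to an error of arbitrarily small probability, `q x` is a function of finitely many letters
of the itinerary of `T x`. -/
def PredictableFromFuture (ρ : Measure Ω) (T : Ω → Ω) (q : Ω → ι) : Prop :=
  ∀ δ > 0, ∃ (s : Finset ℕ) (g : (s → ι) → ι),
    ρ.real {x | q x ≠ g (s.restrict (itinerary T q (T x)))} ≤ δ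

lemma eventually_le_mul_of_succ_le {H : ℕ → ℝ} {c ε : ℝ} (hc : c < ε) {K : ℕ}
    (hstep : ∀ N, K ≤ N → H (N + 1) ≤ H N + c) : ∀ᶠ N : ℕ in atTop, H N ≤ N * ε := by
  have hlinear (M : ℕ) : H (K + M) ≤ H K + M * c := by
    induction M with
    | zero => simp
    | succ M ih =>
      rw [← add_assoc]
      push_cast
      linarith [hstep (K + M) (Nat.le_add_right K M)]
  have hgap : Tendsto (fun M : ℕ => (M : ℝ) * (ε - c)) atTop atTop :=
    tendsto_natCast_atTop_atTop.atTop_mul_const (sub_pos.2 hc)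
  rw [← map_add_atTop_eq_nat K, eventually_map]
  filter_upwards [hgap.eventually_ge_atTop (H K - K * ε)] with M hM
  rw [add_comm M K]
  push_cast
  linarith [hlinear M]

lemma blockEntropy_comp_le [IsFiniteMeasure ρ] {κ : Type*} [Fintype ι] [Fintype κ]
    [MeasurableSpace κ] [MeasurableSingletonClass κ] (hT : Measurable T) {q : Ω → κ}
    (hq : Measurable q) (f : κ → ι) (N : ℕ) :
    blockEntropy ρ T (f ∘ q) N ≤ blockEntropy ρ T q N :=
  shannonEntropy_comp_le
    (measurable_pi_lambda _ fun i : Fin N => hq.comp (hT.iterate i)) fun w i => f (w i)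

section

variable [IsProbabilityMeasure ρ] [Fintype ι] [MeasurableSpace ι] [MeasurableSingletonClass ι]
  {q : Ω → ι}

lemma blockEntropy_succ_le (hT : MeasurePreserving T ρ ρ) (hq : Measurable q) {s : Finset ℕ}
    (g : (s → ι) → ι) {N : ℕ} (hs : ∀ i ∈ s, i < N) :
    blockEntropy ρ T q (N + 1) ≤ blockEntropy ρ T q N
      + Real.qaryEntropy (Fintype.card ι)
        (ρ.real {x | q x ≠ g (s.restrict (itinerary T q (T x)))}) := by
  set W : Ω → (Fin N → ι) := fun x i => itinerary T q x i
  have hW : Measurable W := measurable_pi_lambda _ fun i => hq.comp (hT.measurable.iterate i)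
  have hcons : (fun x (i : Fin (N + 1)) => itinerary T q x i)
      = (fun z : ι × (Fin N → ι) => Fin.cons z.1 z.2) ∘ fun x => (q x, W (T x)) := by
    funext x i
    refine Fin.cases rfl (fun j => rfl) i
  calc blockEntropy ρ T q (N + 1) ≤ shannonEntropy ρ (fun x => (q x, W (T x))) := by
        rw [blockEntropy, hcons]
        exact shannonEntropy_comp_le (hq.prodMk (hW.comp hT.measurable)) _
    _ ≤ shannonEntropy ρ (W ∘ T) + _ :=
        shannonEntropy_prodMk_le hq (hW.comp hT.measurable) fun w => g fun i => w ⟨i, hs i i.2⟩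
    _ = blockEntropy ρ T q N + _ := by
        rw [shannonEntropy_comp_measurePreserving hW hT]
        rfl

lemma PredictableFromFuture.eventually_blockEntropy_le (hpred : PredictableFromFuture ρ T q)
    (hT : MeasurePreserving T ρ ρ) (hq : Measurable q) {ε : ℝ} (hε : 0 < ε) :
    ∀ᶠ N : ℕ in atTop, blockEntropy ρ T q N ≤ N * ε := by
  have hsmall : ∀ᶠ e in nhds 0, Real.qaryEntropy (Fintype.card ι) e < ε / 2 :=
    Real.qaryEntropy_continuous.continuousAt.eventually_lt_const
      (by simpa only [Real.qaryEntropy_zero] using half_pos hε)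
  obtain ⟨η, hη, hball⟩ := Metric.eventually_nhds_iff.1 hsmall
  obtain ⟨s, g, hg⟩ := hpred (η / 2) (half_pos hη)
  refine eventually_le_mul_of_succ_le (half_lt_self hε) (K := s.sup id + 1) fun N hN => ?_
  have hs : ∀ i ∈ s, i < N := fun i hi =>
    (Nat.lt_succ_of_le (s.le_sup (f := id) hi)).trans_le hN
  refine (blockEntropy_succ_le hT hq g hs).trans ?_
  gcongr
  refine (hball ?_).le
  rw [Real.dist_0_eq_abs, abs_of_nonneg measureReal_nonneg]
  linarith

end

lemma IsFinMeasPartition.exists_label [NeZero ρ] {m : ℕ} {P : Fin m → Set Ω}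
    (hP : IsFinMeasPartition ρ P) :
    ∃ p : Ω → Fin m, Measurable p ∧ ∀ᵐ x ∂ρ, ∀ i, x ∈ P i ↔ p x = i := by
  obtain ⟨hmeas, hdisj, hnull⟩ := hP
  have hcover : ∀ᵐ x ∂ρ, ∃ i, x ∈ P i := by
    filter_upwards [mem_ae_iff.2 hnull] with x hx using Set.mem_iUnion.1 hx
  obtain ⟨-, i₀, -⟩ := hcover.exists
  have : Nonempty (Fin m) := ⟨i₀⟩
  obtain ⟨p, hp, hpP⟩ := exists_measurable_piecewise P hmeas (fun i _ => i)
    (fun _ => measurable_const) fun i j hij x hx => (Set.disjoint_left.1 (hdisj hij) hx.1 hx.2).elim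
  refine ⟨p, hp, ?_⟩
  filter_upwards [hcover] with x ⟨j, hj⟩ i
  refine ⟨fun hi => hpP i hi, fun hi => ?_⟩
  rwa [← hi, hpP j hj]

lemma finPartitionEntropy_refinedPartition (hT : Measure.QuasiMeasurePreserving T ρ ρ) {m : ℕ}
    {P : Fin m → Set Ω} {p : Ω → Fin m} (hp : ∀ᵐ x ∂ρ, ∀ i, x ∈ P i ↔ p x = i) (N : ℕ) :
    finPartitionEntropy ρ (refinedPartition T P N) = ENNReal.ofReal (blockEntropy ρ T p N) := by
  have horbit : ∀ᵐ x ∂ρ, ∀ k i, T^[k] x ∈ P i ↔ p (T^[k] x) = i :=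
    ae_all_iff.2 fun k => (hT.iterate k).ae hp
  rw [finPartitionEntropy, blockEntropy, shannonEntropy]
  congr! 3 with f
  refine measureReal_congr ?_
  filter_upwards [horbit] with x hx
  refine propext (?_ : x ∈ refinedPartition T P N f ↔ (fun i : Fin N => itinerary T p x i) = f)
  simp only [refinedPartition, Set.mem_iInter, Set.mem_preimage, funext_iff, hx, itinerary]

lemma ksEntropy_eq_zero_of_predictableFromFuture [IsProbabilityMeasure ρ] {κ : Type*}
    [Finite κ] [MeasurableSpace κ] [MeasurableSingletonClass κ] (hT : MeasurePreserving T ρ ρ)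
    {d : Ω → κ} (hd : Measurable d)
    (hpred : ∀ (m : ℕ) (p : Ω → Fin m), Measurable p →
      PredictableFromFuture ρ T fun x => (p x, d x)) :
    ksEntropy T ρ = 0 := by
  have := Fintype.ofFinite κ
  refine nonpos_iff_eq_zero.1 <| iSup_le fun m => iSup_le fun P => iSup_le fun hP => ?_
  obtain ⟨p, hp, hpP⟩ := hP.exists_label
  refine ENNReal.le_of_forall_pos_le_add fun ε hε _ => ?_
  obtain ⟨N, hN, hN0⟩ := (((hpred m p hp).eventually_blockEntropy_le hT (hp.prodMk hd)
    (NNReal.coe_pos.2 hε)).and (eventually_ge_atTop 1)).exists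
  obtain ⟨N, rfl⟩ := Nat.exists_eq_add_of_le' hN0
  refine (iInf_le _ N).trans (ENNReal.div_le_of_le_mul ?_)
  have hblock : blockEntropy ρ T p (N + 1) ≤ (N + 1 : ℕ) * ε :=
    (blockEntropy_comp_le hT.measurable (hp.prodMk hd) Prod.fst (N + 1)).trans hN
  calc finPartitionEntropy ρ (refinedPartition T P (N + 1))
      = ENNReal.ofReal (blockEntropy ρ T p (N + 1)) :=
        finPartitionEntropy_refinedPartition hT.quasiMeasurePreserving hpP _
    _ ≤ ENNReal.ofReal ((N + 1 : ℕ) * ε) := ENNReal.ofReal_le_ofReal hblock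
    _ = (0 + ε) * (N + 1) := by
        rw [ENNReal.ofReal_mul (Nat.cast_nonneg _), ENNReal.ofReal_natCast,
          ENNReal.ofReal_coe_nnreal, zero_add, mul_comm, Nat.cast_succ]

end EntropyRate

section CylinderApproximation

/-- The letter `a` with `y ∈ U a`, if there is exactly one; otherwise arbitrary. This turns
approximations `U a` of the level sets of a map into an approximation of the map. -/
noncomputable def selectLetter {Y ι : Type*} [Nonempty ι] (U : ι → Set Y) (y : Y) : ι :=
  Classical.epsilon fun a => y ∈ U a

lemma selectLetter_eq {Y ι : Type*} [Nonempty ι] {U : ι → Set Y} {y : Y} {a : ι}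
    (h : ∀ b, y ∈ U b ↔ b = a) : selectLetter U y = a := by
  rw [selectLetter, funext fun b => propext (h b), Classical.epsilon_singleton]

lemma measurable_selectLetter {Y ι : Type*} [Finite ι] [Nonempty ι] [MeasurableSpace ι]
    [MeasurableSpace Y] {U : ι → Set Y} (hU : ∀ a, MeasurableSet (U a)) :
    Measurable (selectLetter U) :=
  (measurable_of_countable fun u : ι → Prop => Classical.epsilon u).comp
    (measurable_pi_lambda _ fun a => measurableSet_setOfPred.1 (hU a))

variable {I : Type*} {κ : I → Type*} [∀ i, MeasurableSpace (κ i)]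

lemma exists_cylinder_measureReal_symmDiff_le (P : Measure (∀ i, κ i)) [IsFiniteMeasure P]
    {A : Set (∀ i, κ i)} (hA : MeasurableSet A) {δ : ℝ} (hδ : 0 < δ) :
    ∃ (s : Finset I) (U : Set (∀ i : s, κ i)), MeasurableSet U ∧
      P.real (symmDiff A (cylinder s U)) ≤ δ := by
  obtain ⟨C, hC, hlt⟩ := (Measure.MeasureDense.of_generateFrom_isSetAlgebra_finite P
    isSetAlgebra_measurableCylinders generateFrom_measurableCylinders.symm).approx A hA
    (measure_ne_top _ _) δ hδ
  obtain ⟨s, U, hU, rfl⟩ := (mem_measurableCylinders C).1 hC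
  exact ⟨s, U, hU, ENNReal.toReal_le_of_le_ofReal hδ.le hlt.le⟩

lemma exists_measurable_comp_restrict_measureReal_ne_le (P : Measure (∀ i, κ i))
    [IsFiniteMeasure P] {ι : Type*} [Finite ι] [Nonempty ι] [MeasurableSpace ι]
    [MeasurableSingletonClass ι] {q : (∀ i, κ i) → ι} (hq : Measurable q) {δ : ℝ} (hδ : 0 < δ) :
    ∃ (s : Finset I) (g : (∀ i : s, κ i) → ι), Measurable g ∧
      P.real {y | q y ≠ g (s.restrict y)} ≤ δ := by
  classical
  have := Fintype.ofFinite ι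
  have hcard : (0 : ℝ) < Fintype.card ι := Nat.cast_pos.2 Fintype.card_pos
  choose s U hU hle using fun a => exists_cylinder_measureReal_symmDiff_le P
    (hq (measurableSet_singleton a)) (div_pos hδ hcard)
  set S : Finset I := Finset.univ.biUnion s
  have hS (a : ι) : s a ⊆ S := Finset.subset_biUnion_of_mem s (Finset.mem_univ a)
  set V : ι → Set (∀ i : S, κ i) := fun a => Finset.restrict₂ (hS a) ⁻¹' U a
  have hsub : {y | q y ≠ selectLetter V (S.restrict y)}
      ⊆ ⋃ a ∈ (Finset.univ : Finset ι), symmDiff (q ⁻¹' {a}) (cylinder (s a) (U a)) := by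
    intro y hy
    by_contra hout
    refine hy (selectLetter_eq fun b => ?_).symm
    simp only [Set.mem_iUnion, Finset.mem_univ, exists_true_left, not_exists, Set.mem_symmDiff,
      Set.mem_preimage, Set.mem_singleton_iff, mem_cylinder, not_or, not_and, not_not] at hout
    exact ⟨fun hb => ((hout b).2 hb).symm, fun hb => (hout b).1 hb.symm⟩
  refine ⟨S, selectLetter V, measurable_selectLetter fun a =>
    Finset.measurable_restrict₂ (hS a) (hU a), ?_⟩
  calc P.real {y | q y ≠ selectLetter V (S.restrict y)}
      ≤ ∑ a, P.real (symmDiff (q ⁻¹' {a}) (cylinder (s a) (U a))) :=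
        (measureReal_mono hsub (measure_ne_top _ _)).trans
          (measureReal_biUnion_finset_le _ _)
    _ ≤ ∑ _a : ι, δ / Fintype.card ι := Finset.sum_le_sum fun a _ => hle a
    _ = δ := by rw [Finset.sum_const, Finset.card_univ, nsmul_eq_mul, mul_div_cancel₀ _ hcard.ne']

lemma exists_measureReal_ne_restrict_itinerary_le {Ω ι κ : Type*} [MeasurableSpace Ω]
    [StandardBorelSpace Ω] {ρ : Measure Ω} [IsFiniteMeasure ρ] {T : Ω → Ω} (hT : Measurable T)
    [MeasurableSpace κ] [StandardBorelSpace κ] {d : Ω → κ} (hd : Measurable d)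
    (hinj : Function.Injective (itinerary T d)) [Finite ι] [Nonempty ι] [MeasurableSpace ι]
    [MeasurableSingletonClass ι] {q : Ω → ι} (hq : Measurable q) {δ : ℝ} (hδ : 0 < δ) :
    ∃ (s : Finset ℕ) (g : (s → κ) → ι), Measurable g ∧
      ρ.real {x | q x ≠ g (s.restrict (itinerary T d x))} ≤ δ := by
  have hmeas := measurable_itinerary hT hd
  obtain ⟨q', hq', rfl⟩ := (hmeas.measurableEmbedding hinj).exists_measurable_extend hq
    fun _ => inferInstance
  obtain ⟨s, g, hg, hle⟩ :=
    exists_measurable_comp_restrict_measureReal_ne_le (ρ.map (itinerary T d)) hq' hδ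
  have hbad : MeasurableSet {y | q' y ≠ g (s.restrict y)} :=
    (measurableSet_eq_fun hq' (hg.comp (Finset.measurable_restrict s))).compl
  rw [map_measureReal_apply hmeas hbad] at hle
  exact ⟨s, g, hg, hle⟩

end CylinderApproximation

section LeftInverse

/-- The letter of `x` is the letter of `σ (T x)`, hence a function of the future itinerary. -/
lemma ksEntropy_eq_zero_of_ae_leftInverse {Ω κ : Type*} [MeasurableSpace Ω] [StandardBorelSpace Ω]
    {ρ : Measure Ω} [IsProbabilityMeasure ρ] [Finite κ] [MeasurableSpace κ]
    [MeasurableSingletonClass κ] {T σ : Ω → Ω} (hT : MeasurePreserving T ρ ρ) {d : Ω → κ}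
    (hd : Measurable d) (hinj : Function.Injective (itinerary T d)) (hσ : Measurable σ)
    (hσT : ∀ᵐ x ∂ρ, σ (T x) = x) : ksEntropy T ρ = 0 := by
  refine ksEntropy_eq_zero_of_predictableFromFuture hT hd fun m p hp δ hδ => ?_
  set q : Ω → Fin m × κ := fun x => (p x, d x)
  have hq : Measurable q := hp.prodMk hd
  have : Nonempty (Fin m × κ) := (nonempty_of_isProbabilityMeasure ρ).map q
  obtain ⟨s, g, hg, hle⟩ :=
    exists_measureReal_ne_restrict_itinerary_le (ρ := ρ) hT.measurable hd hinj (hq.comp hσ) hδ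
  refine ⟨s, fun w => g fun i => (w i).2, le_of_eq_of_le ?_ hle⟩
  have hbad : MeasurableSet {y | (q ∘ σ) y ≠ g (s.restrict (itinerary T d y))} :=
    (measurableSet_eq_fun (hq.comp hσ) (hg.comp ((Finset.measurable_restrict s).comp
      (measurable_itinerary hT.measurable hd)))).compl
  rw [← hT.measureReal_preimage hbad.nullMeasurableSet]
  refine measureReal_congr ?_
  filter_upwards [hσT] with x hx
  change (q x ≠ g (s.restrict (itinerary T d (T x)))) =
    (q (σ (T x)) ≠ g (s.restrict (itinerary T d (T x))))
  rw [hx]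

end LeftInverse

section Recurrence

variable {X : Type*} [MeasurableSpace X] {ρ : Measure X}

lemma tendsto_prod_range_zero_of_frequently_lt {a : ℕ → ℝ≥0∞} (ha : ∀ i, a i ≤ 1) {c : ℝ≥0∞}
    (hc : c < 1) (hfreq : ∃ᶠ i in Filter.atTop, a i < c) :
    Filter.Tendsto (fun k => ∏ i ∈ Finset.range k, a i) Filter.atTop (nhds 0) := by
  have hanti : Antitone fun k => ∏ i ∈ Finset.range k, a i :=
    antitone_nat_of_succ_le fun k => by
      rw [Finset.prod_range_succ]
      exact mul_le_of_le_one_right' (ha k)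
  have hpow (m : ℕ) : ∃ k, ∏ i ∈ Finset.range k, a i ≤ c ^ m := by
    induction m with
    | zero => exact ⟨0, by simp⟩
    | succ m ih =>
      obtain ⟨k, hk⟩ := ih
      obtain ⟨i, hki, hi⟩ := Filter.frequently_atTop.1 hfreq k
      refine ⟨i + 1, ?_⟩
      rw [Finset.prod_range_succ, pow_succ]
      exact mul_le_mul' ((hanti hki).trans hk) hi.le
  refine ENNReal.tendsto_atTop_zero.2 fun ε hε => ?_
  obtain ⟨m, hm⟩ := ENNReal.tendsto_atTop_zero.1
    (ENNReal.tendsto_pow_atTop_nhds_zero_of_lt_one hc) ε hε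
  obtain ⟨k, hk⟩ := hpow m
  exact ⟨k, fun j hj => (hanti hj).trans (hk.trans (hm m le_rfl))⟩

lemma exists_lt_measure_setOf_lt_ne_zero {f : X → ℝ≥0∞} {a : ℝ≥0∞} (ha : a ≠ 0)
    (hle : ∀ᵐ x ∂ρ, f x ≤ a) (hne : ¬ ∀ᵐ x ∂ρ, f x = a) :
    ∃ c < a, ρ {x | f x < c} ≠ 0 := by
  contrapose! hne
  obtain ⟨u, -, hu, hlim⟩ := exists_seq_strictMono_tendsto' (pos_iff_ne_zero.2 ha)
  have hge : ∀ᵐ x ∂ρ, ∀ k, u k ≤ f x := ae_all_iff.2 fun k => by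
    simpa only [ae_iff, not_le] using hne (u k) (hu k).2
  filter_upwards [hge, hle] with x hxge hxle
  exact le_antisymm hxle (le_of_tendsto' hlim hxge)

lemma ae_frequently_iterate_mem_of_ergodic [IsFiniteMeasure ρ] {T : X → X} (hT : Ergodic T ρ)
    {D : Set X} (hD : MeasurableSet D) (hρD : ρ D ≠ 0) :
    ∀ᵐ x ∂ρ, ∃ᶠ i in Filter.atTop, T^[i] x ∈ D := by
  set V : Set X := {x | ∃ᶠ i in Filter.atTop, T^[i] x ∈ D}
  have hV : MeasurableSet V := by
    have hV : V = Filter.limsup (fun i => T^[i] ⁻¹' D) Filter.atTop :=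
      Set.ext fun x => (Filter.mem_limsup_iff_frequently_mem (s := fun i => T^[i] ⁻¹' D)).symm
    exact hV ▸ .measurableSet_limsup fun i => hT.measurable.iterate i hD
  have hinv : T ⁻¹' V = V := by
    ext x
    simp only [V, Set.mem_preimage, Set.mem_ofPred_eq, ← Function.iterate_succ_apply]
    conv_rhs => rw [← Filter.map_add_atTop_eq_nat 1, Filter.frequently_map]
  refine (hT.ae_mem_or_ae_notMem hV hinv).resolve_right fun hnot => hρD ?_
  refine measure_eq_zero_iff_ae_notMem.2 ?_
  filter_upwards [hnot, hT.toMeasurePreserving.conservative.ae_mem_imp_frequently_image_mem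
    hD.nullMeasurableSet] with x hx hrec hxD
  exact hx (hrec hxD)

lemma sum_restrict_preimage_singleton {ι : Type*} [Countable ι] [MeasurableSpace ι]
    [MeasurableSingletonClass ι] {q : X → ι} (hq : Measurable q) :
    Measure.sum (fun j => ρ.restrict (q ⁻¹' {j})) = ρ := by
  rw [← Measure.restrict_iUnion (pairwise_disjoint_fiber q)
    fun j => hq (measurableSet_singleton j), ← Set.preimage_iUnion, Set.iUnion_of_singleton,
    Set.preimage_univ, Measure.restrict_univ]

lemma sq_lintegral_le_measure_univ_mul_lintegral_sq {f : X → ℝ≥0∞} (hf : AEMeasurable f ρ) :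
    (∫⁻ x, f x ∂ρ) ^ 2 ≤ ρ Set.univ * ∫⁻ x, f x ^ 2 ∂ρ := by
  have hHolder := ENNReal.lintegral_mul_le_Lp_mul_Lq ρ Real.HolderConjugate.two_two
    (aemeasurable_const (b := (1 : ℝ≥0∞))) hf
  simp only [Pi.mul_apply, one_mul, ENNReal.rpow_two, one_pow,
    lintegral_const] at hHolder
  refine (pow_le_pow_left₀ zero_le hHolder 2).trans_eq ?_
  rw [mul_pow, ← ENNReal.rpow_mul_natCast, ← ENNReal.rpow_mul_natCast]
  norm_num

end Recurrence

/-- A measurable map `map` that is a bijection from each fibre `{digit = j}` onto the whole space,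
with inverse `branch j`. -/
structure FullBranchMap (X ι : Type*) [MeasurableSpace X] [MeasurableSpace ι] where
  map : X → X
  digit : X → ι
  branch : ι → X → X
  measurable_map : Measurable map
  measurable_digit : Measurable digit
  measurable_branch : ∀ j, Measurable (branch j)
  branch_digit_map : ∀ x, branch (digit x) (map x) = x
  map_branch : ∀ j y, map (branch j y) = y
  digit_branch : ∀ j y, digit (branch j y) = j

namespace FullBranchMap

variable {X ι : Type*} [MeasurableSpace X] [MeasurableSpace ι] (S : FullBranchMap X ι)
  (ρ : Measure X)

/-- The conditional probability, for an invariant measure `ρ`, that `x` lies in the branch `j` given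
that `S.map x = y`. -/
noncomputable def density (j : ι) : X → ℝ≥0∞ :=
  ((ρ.restrict (S.digit ⁻¹' {j})).map S.map).rnDeriv ρ

/-- The conditional mass of the point `x` in its fibre `S.map ⁻¹' {S.map x}`. -/
noncomputable def weight (x : X) : ℝ≥0∞ := S.density ρ (S.digit x) (S.map x)

/-- The conditional mass of the point `x` in its fibre under the iterate `S.map^[k]`. -/
noncomputable def orbitWeight (k : ℕ) (x : X) : ℝ≥0∞ :=
  ∏ i ∈ Finset.range k, S.weight ρ (S.map^[i] x)

lemma measurable_density (j : ι) : Measurable (S.density ρ j) := Measure.measurable_rnDeriv _ _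

lemma measurable_weight [Countable ι] [MeasurableSingletonClass ι] : Measurable (S.weight ρ) :=
  (measurable_from_prod_countable_right (f := fun z : ι × X => S.density ρ z.1 z.2)
    (S.measurable_density ρ)).comp (S.measurable_digit.prodMk S.measurable_map)

lemma measurable_orbitWeight [Countable ι] [MeasurableSingletonClass ι] (k : ℕ) :
    Measurable (S.orbitWeight ρ k) :=
  Finset.measurable_prod _ fun i _ =>
    (S.measurable_weight ρ).comp (S.measurable_map.iterate i)

/-- The transfer operator of `S` with respect to `ρ`: the conditional expectation of `f x` given
`S.map x = y`. -/
noncomputable def transfer (f : X → ℝ≥0∞) (y : X) : ℝ≥0∞ :=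
  ∑' j, S.density ρ j y * f (S.branch j y)

lemma measurable_transfer [Countable ι] {f : X → ℝ≥0∞} (hf : Measurable f) :
    Measurable (S.transfer ρ f) :=
  Measurable.tsum fun j => (S.measurable_density ρ j).mul (hf.comp (S.measurable_branch j))

lemma measurable_transfer_iterate [Countable ι] {f : X → ℝ≥0∞} (hf : Measurable f) (k : ℕ) :
    Measurable ((S.transfer ρ)^[k] f) :=
  Function.Iterate.rec _ hf (fun _ => S.measurable_transfer ρ) k

lemma transfer_map {f : X → ℝ≥0∞} {x : X} (hf : ∀ z, S.map z = S.map x → z ≠ x → f z = 0) :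
    S.transfer ρ f (S.map x) = S.weight ρ x * f x := by
  rw [transfer, tsum_eq_single (S.digit x), S.branch_digit_map, weight]
  intro j hj
  rw [hf _ (S.map_branch j _) fun h => hj (by rw [← h, S.digit_branch]), mul_zero]

lemma transfer_iterate_map_iterate {f : X → ℝ≥0∞} {k : ℕ} {x : X}
    (hf : ∀ z, S.map^[k] z = S.map^[k] x → z ≠ x → f z = 0) :
    (S.transfer ρ)^[k] f (S.map^[k] x) = S.orbitWeight ρ k x * f x := by
  induction k generalizing f x with
  | zero => simp [orbitWeight]
  | succ k ih =>
    simp only [Function.iterate_succ_apply] at hf ⊢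
    have hvanish (z : X) (hz : S.map^[k] z = S.map^[k] (S.map x)) (hne : z ≠ S.map x) :
        S.transfer ρ f z = 0 := by
      refine ENNReal.tsum_eq_zero.2 fun j => ?_
      rw [hf _ (by rw [S.map_branch, hz]) fun h => hne (by rw [← h, S.map_branch]), mul_zero]
    rw [ih hvanish, S.transfer_map ρ fun z hz => hf z (congrArg _ hz), ← mul_assoc, orbitWeight,
      orbitWeight, Finset.prod_range_succ']
    rfl

variable {ρ}

lemma map_restrict_digit_eq_withDensity [IsFiniteMeasure ρ] (hρ : MeasurePreserving S.map ρ ρ)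
    (j : ι) :
    (ρ.restrict (S.digit ⁻¹' {j})).map S.map = ρ.withDensity (S.density ρ j) := by
  have hle : (ρ.restrict (S.digit ⁻¹' {j})).map S.map ≤ ρ :=
    (Measure.map_mono Measure.restrict_le_self S.measurable_map).trans_eq hρ.map_eq
  exact (Measure.withDensity_rnDeriv_eq _ _ hle.absolutelyContinuous).symm

section CountablyManyBranches

variable [IsFiniteMeasure ρ] [Countable ι] [MeasurableSingletonClass ι]

lemma lintegral_mul_comp_map (hρ : MeasurePreserving S.map ρ ρ) {f g : X → ℝ≥0∞}
    (hf : Measurable f) (hg : Measurable g) :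
    ∫⁻ x, f x * g (S.map x) ∂ρ = ∫⁻ y, S.transfer ρ f y * g y ∂ρ := by
  have hfg (j : ι) : Measurable fun y => f (S.branch j y) * g y :=
    (hf.comp (S.measurable_branch j)).mul hg
  have hbranch (j : ι) : ∫⁻ x in S.digit ⁻¹' {j}, f x * g (S.map x) ∂ρ
      = ∫⁻ y, S.density ρ j y * (f (S.branch j y) * g y) ∂ρ := by
    calc ∫⁻ x in S.digit ⁻¹' {j}, f x * g (S.map x) ∂ρ
        = ∫⁻ x in S.digit ⁻¹' {j}, f (S.branch j (S.map x)) * g (S.map x) ∂ρ :=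
          setLIntegral_congr_fun (S.measurable_digit (measurableSet_singleton j)) fun x hx => by
            rw [← show S.digit x = j from hx, S.branch_digit_map]
      _ = ∫⁻ y, f (S.branch j y) * g y ∂(ρ.withDensity (S.density ρ j)) := by
          rw [← S.map_restrict_digit_eq_withDensity hρ, lintegral_map (hfg j) S.measurable_map]
      _ = ∫⁻ y, S.density ρ j y * (f (S.branch j y) * g y) ∂ρ :=
          lintegral_withDensity_eq_lintegral_mul _ (S.measurable_density ρ j) (hfg j)
  calc ∫⁻ x, f x * g (S.map x) ∂ρ
      = ∑' j, ∫⁻ x in S.digit ⁻¹' {j}, f x * g (S.map x) ∂ρ := by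
        rw [← lintegral_sum_measure, sum_restrict_preimage_singleton S.measurable_digit]
    _ = ∫⁻ y, ∑' j, S.density ρ j y * (f (S.branch j y) * g y) ∂ρ := by
        simp_rw [hbranch]
        exact (lintegral_tsum fun j =>
          ((S.measurable_density ρ j).mul (hfg j)).aemeasurable).symm
    _ = ∫⁻ y, S.transfer ρ f y * g y ∂ρ := by
        simp only [transfer, ← ENNReal.tsum_mul_right, mul_assoc]

lemma lintegral_mul_comp_map_iterate (hρ : MeasurePreserving S.map ρ ρ) (k : ℕ)
    {f g : X → ℝ≥0∞} (hf : Measurable f) (hg : Measurable g) :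
    ∫⁻ x, f x * g (S.map^[k] x) ∂ρ = ∫⁻ y, (S.transfer ρ)^[k] f y * g y ∂ρ := by
  induction k generalizing f with
  | zero => rfl
  | succ k ih =>
    simp only [Function.iterate_succ_apply]
    rw [← ih (S.measurable_transfer ρ hf)]
    exact S.lintegral_mul_comp_map hρ hf (hg.comp (S.measurable_map.iterate k))

lemma tsum_density_ae_eq_one (hρ : MeasurePreserving S.map ρ ρ) :
    ∀ᵐ y ∂ρ, ∑' j, S.density ρ j y = 1 := by
  have hsum : ρ.withDensity (∑' j, S.density ρ j) = ρ.withDensity 1 := by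
    rw [withDensity_tsum (S.measurable_density ρ), withDensity_one]
    simp_rw [← S.map_restrict_digit_eq_withDensity hρ]
    rw [← Measure.map_sum S.measurable_map.aemeasurable,
      sum_restrict_preimage_singleton S.measurable_digit, hρ.map_eq]
  have happly (y : X) : (∑' j, S.density ρ j) y = ∑' j, S.density ρ j y :=
    tsum_apply (Pi.summable.2 fun _ => ENNReal.summable)
  have hmeas : Measurable (∑' j, S.density ρ j) := by
    rw [funext happly]
    exact Measurable.tsum (S.measurable_density ρ)
  filter_upwards [(withDensity_eq_iff_of_sigmaFinite hmeas.aemeasurable aemeasurable_one).1 hsum]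
    with y hy
  exact (happly y).symm.trans hy

lemma ae_weight_le_one (hρ : MeasurePreserving S.map ρ ρ) : ∀ᵐ x ∂ρ, S.weight ρ x ≤ 1 := by
  filter_upwards [hρ.quasiMeasurePreserving.ae (S.tsum_density_ae_eq_one hρ)] with x hx
  exact hx ▸ ENNReal.le_tsum (f := fun j => S.density ρ j (S.map x)) (S.digit x)

lemma ae_forall_weight_iterate_le_one (hρ : MeasurePreserving S.map ρ ρ) :
    ∀ᵐ x ∂ρ, ∀ k, S.weight ρ (S.map^[k] x) ≤ 1 :=
  ae_all_iff.2 fun k => (hρ.iterate k).quasiMeasurePreserving.ae (S.ae_weight_le_one hρ)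

lemma ae_tendsto_orbitWeight_zero (hρ : Ergodic S.map ρ)
    (hweight : ¬ ∀ᵐ x ∂ρ, S.weight ρ x = 1) :
    ∀ᵐ x ∂ρ, Filter.Tendsto (fun k => S.orbitWeight ρ k x) Filter.atTop (nhds 0) := by
  obtain ⟨c, hc, hpos⟩ := exists_lt_measure_setOf_lt_ne_zero one_ne_zero
    (S.ae_weight_le_one hρ.toMeasurePreserving) hweight
  filter_upwards [S.ae_forall_weight_iterate_le_one hρ.toMeasurePreserving,
    ae_frequently_iterate_mem_of_ergodic hρ
      (measurableSet_lt (S.measurable_weight ρ) measurable_const) hpos] with x hle hfreq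
  exact tendsto_prod_range_zero_of_frequently_lt hle hc hfreq

/-- Cauchy–Schwarz for the image of `E` under the transfer operator, whose integral is `ρ E` and
whose square has integral `∫_E orbitWeight`. -/
lemma sq_measure_le_mul_setLIntegral_orbitWeight (hρ : MeasurePreserving S.map ρ ρ) {E : Set X}
    (hE : MeasurableSet E) {k : ℕ} (hinj : Set.InjOn S.map^[k] E) :
    ρ E ^ 2 ≤ ρ Set.univ * ∫⁻ x in E, S.orbitWeight ρ k x ∂ρ := by
  have hind : Measurable (E.indicator (1 : X → ℝ≥0∞)) := measurable_one.indicator hE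
  set g := (S.transfer ρ)^[k] (E.indicator 1)
  have hg : Measurable g := S.measurable_transfer_iterate ρ hind k
  have hmass : ∫⁻ y, g y ∂ρ = ρ E := by
    simpa only [mul_one, lintegral_indicator_one hE] using
      (S.lintegral_mul_comp_map_iterate hρ k hind (measurable_const (a := (1 : ℝ≥0∞)))).symm
  have hgE (x : X) (hx : x ∈ E) : g (S.map^[k] x) = S.orbitWeight ρ k x :=
    (S.transfer_iterate_map_iterate ρ fun z hz hne =>
      Set.indicator_of_notMem (fun hzE => hne (hinj hzE hx hz)) _).trans
      (by rw [Set.indicator_of_mem hx, Pi.one_apply, mul_one])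
  have hsq : ∫⁻ y, g y ^ 2 ∂ρ = ∫⁻ x in E, S.orbitWeight ρ k x ∂ρ := by
    calc ∫⁻ y, g y ^ 2 ∂ρ = ∫⁻ x, E.indicator 1 x * g (S.map^[k] x) ∂ρ := by
          simp_rw [sq]
          exact (S.lintegral_mul_comp_map_iterate hρ k hind hg).symm
      _ = ∫⁻ x, E.indicator (fun x => g (S.map^[k] x)) x ∂ρ := by
          congr with x
          by_cases hx : x ∈ E <;> simp [hx]
      _ = ∫⁻ x in E, S.orbitWeight ρ k x ∂ρ := by
          rw [lintegral_indicator hE, setLIntegral_congr_fun hE hgE]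
  rw [← hmass, ← hsq]
  exact sq_lintegral_le_measure_univ_mul_lintegral_sq hg.aemeasurable

lemma measure_eq_zero_of_injOn_iterate_of_weight (hρ : Ergodic S.map ρ)
    (hweight : ¬ ∀ᵐ x ∂ρ, S.weight ρ x = 1) {E : Set X} (hE : MeasurableSet E)
    (hinj : ∀ k, Set.InjOn S.map^[k] E) : ρ E = 0 := by
  have hle (k : ℕ) : ∀ᵐ x ∂ρ.restrict E, S.orbitWeight ρ k x ≤ 1 := by
    filter_upwards [ae_restrict_of_ae
      (S.ae_forall_weight_iterate_le_one hρ.toMeasurePreserving)] with x hx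
    exact Finset.prod_le_one' fun i _ => hx i
  have hlim : Filter.Tendsto (fun k => ∫⁻ x in E, S.orbitWeight ρ k x ∂ρ) Filter.atTop
      (nhds 0) := by
    simpa only [lintegral_zero] using tendsto_lintegral_of_dominated_convergence
      (fun _ => (1 : ℝ≥0∞)) (S.measurable_orbitWeight ρ) hle (by simp)
      (ae_restrict_of_ae (S.ae_tendsto_orbitWeight_zero hρ hweight))
  have hmul := ENNReal.Tendsto.const_mul hlim (Or.inr (measure_ne_top ρ Set.univ))
  rw [mul_zero] at hmul
  exact eq_zero_of_pow_eq_zero (nonpos_iff_eq_zero.1 (ge_of_tendsto' hmul fun k =>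
    S.sq_measure_le_mul_setLIntegral_orbitWeight hρ.toMeasurePreserving hE (hinj k)))

end CountablyManyBranches

lemma exists_measurable_ae_leftInverse [IsFiniteMeasure ρ] [Finite ι] [Nonempty ι]
    [MeasurableSingletonClass ι] (hρ : MeasurePreserving S.map ρ ρ)
    (hweight : ∀ᵐ x ∂ρ, S.weight ρ x = 1) :
    ∃ σ : X → X, Measurable σ ∧ ∀ᵐ x ∂ρ, σ (S.map x) = x := by
  classical
  set heavy : ι → Set X := fun j => {y | S.density ρ j y = 1}
  have hheavy (j : ι) : MeasurableSet (heavy j) :=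
    S.measurable_density ρ j (measurableSet_singleton 1)
  refine ⟨fun y => S.branch (selectLetter heavy y) y, ?_, ?_⟩
  · exact (measurable_from_prod_countable_right (f := fun z : ι × X => S.branch z.1 z.2)
      S.measurable_branch).comp ((measurable_selectLetter hheavy).prodMk measurable_id)
  · filter_upwards [hweight, hρ.quasiMeasurePreserving.ae (S.tsum_density_ae_eq_one hρ)]
      with x hx hsum
    have honly (j : ι) : S.map x ∈ heavy j ↔ j = S.digit x := by
      refine ⟨fun hj => ?_, fun hj => hj ▸ hx⟩
      by_contra hne
      have htwo : S.density ρ j (S.map x) + S.density ρ (S.digit x) (S.map x) ≤ 1 := by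
        rw [← hsum, ← Finset.sum_pair (f := fun i => S.density ρ i (S.map x)) hne]
        exact ENNReal.sum_le_tsum _
      rw [show S.density ρ j (S.map x) = 1 from hj,
        show S.density ρ (S.digit x) (S.map x) = 1 from hx] at htwo
      norm_num at htwo
    rw [selectLetter_eq honly, S.branch_digit_map]

theorem measure_eq_zero_of_injOn_iterate [StandardBorelSpace X] [IsProbabilityMeasure ρ]
    [Finite ι] [MeasurableSingletonClass ι]
    (hgen : Function.Injective (itinerary S.map S.digit)) (hρ : Ergodic S.map ρ)
    (hent : 0 < ksEntropy S.map ρ) {E : Set X} (hE : MeasurableSet E)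
    (hinj : ∀ k, Set.InjOn S.map^[k] E) : ρ E = 0 := by
  refine S.measure_eq_zero_of_injOn_iterate_of_weight hρ (fun hweight => hent.ne' ?_) hE hinj
  have : Nonempty ι := (nonempty_of_isProbabilityMeasure ρ).map S.digit
  obtain ⟨σ, hσ, hσT⟩ := S.exists_measurable_ae_leftInverse hρ.toMeasurePreserving hweight
  exact ksEntropy_eq_zero_of_ae_leftInverse hρ.toMeasurePreserving S.measurable_digit hgen hσ hσT

end FullBranchMap

section TranslationRecurrence

/-- If `x ∈ B` had only finitely many returns to `B`, a small basic open set around `x` would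
exclude all of them but `x` itself. -/
lemma ae_infinite_setOf_add_mem {G : Type*} [AddLeftCancelMonoid G] [TopologicalSpace G]
    [T1Space G] [SecondCountableTopology G] [MeasurableSpace G] [OpensMeasurableSpace G]
    [MeasurableAdd G] {μ : Measure G} {N : Set G} (hN : N.Countable)
    (hnull : ∀ E, MeasurableSet E → (∀ x ∈ E, ∀ t ∈ N, x + t ∈ E → t = 0) → μ E = 0)
    {B : Set G} (hB : MeasurableSet B) :
    ∀ᵐ x ∂μ, x ∈ B → {t | t ∈ N ∧ x + t ∈ B}.Infinite := by
  have hbasis := TopologicalSpace.isBasis_countableBasis G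
  set isolated : Set G → Set G := fun U => {x ∈ B ∩ U | ∀ t ∈ N, x + t ∈ B ∩ U → t = 0}
  have hisolated (U : Set G) (hU : U ∈ TopologicalSpace.countableBasis G) :
      μ (isolated U) = 0 := by
    have hBU : MeasurableSet (B ∩ U) := hB.inter (hbasis.isOpen hU).measurableSet
    have hreturn : MeasurableSet {x | ∀ t ∈ N, x + t ∈ B ∩ U → t = 0} := by
      simp only [Set.ofPred_forall]
      exact .biInter hN fun t _ => (measurable_add_const t hBU).imp (.const _)
    exact hnull _ (hBU.inter hreturn) fun x hx t ht hxt => hx.2 t ht hxt.1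
  have hae : ∀ᵐ x ∂μ, ∀ U ∈ TopologicalSpace.countableBasis G, x ∉ isolated U :=
    (ae_ball_iff (TopologicalSpace.countable_countableBasis G)).2 fun U hU =>
      measure_eq_zero_iff_ae_notMem.1 (hisolated U hU)
  filter_upwards [hae] with x hx hxB hfin
  set others : Set G := (x + ·) '' ({t | t ∈ N ∧ x + t ∈ B} \ {0})
  have hclosed : IsClosed others := (hfin.sdiff.image _).isClosed
  have hxout : x ∉ others := by
    rintro ⟨t, ⟨-, ht⟩, hxt⟩
    exact ht (add_eq_left.1 hxt)
  obtain ⟨U, hU, hxU, hsub⟩ := hbasis.exists_subset_of_mem_open hxout hclosed.isOpen_compl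
  refine hx U hU ⟨⟨hxB, hxU⟩, fun t ht hxt => ?_⟩
  by_contra ht0
  exact hsub hxt.2 ⟨t, ⟨⟨ht, hxt.1⟩, ht0⟩, rfl⟩

end TranslationRecurrence

section Circle

/-- The representative in `[0, 1)` of a point of the circle. -/
noncomputable def unitRep (x : UnitAddCircle) : ℝ := AddCircle.measurableEquivIco (1 : ℝ) 0 x

lemma measurable_unitRep : Measurable unitRep :=
  measurable_subtype_coe.comp (AddCircle.measurableEquivIco (1 : ℝ) 0).measurable

lemma unitRep_mem_Ico (x : UnitAddCircle) : unitRep x ∈ Set.Ico (0 : ℝ) 1 := by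
  simpa only [unitRep, zero_add] using (AddCircle.measurableEquivIco (1 : ℝ) 0 x).2

lemma coe_unitRep (x : UnitAddCircle) : (unitRep x : UnitAddCircle) = x :=
  AddCircle.coe_equivIco (p := (1 : ℝ)) (a := 0)

lemma unitRep_injective : Function.Injective unitRep :=
  Function.LeftInverse.injective (g := fun r : ℝ => (r : UnitAddCircle)) coe_unitRep

lemma unitRep_coe (r : ℝ) : unitRep (r : UnitAddCircle) = Int.fract r :=
  (AddCircle.coe_equivIco_mk_apply (1 : ℝ) r).trans (by rw [div_one, mul_one])

lemma unitRep_nsmul (n : ℕ) (x : UnitAddCircle) : unitRep (n • x) = Int.fract (n * unitRep x) := by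
  rw [← unitRep_coe, ← nsmul_eq_mul, AddCircle.coe_nsmul, coe_unitRep]

lemma countable_nAdicRationals (n : ℕ) : (nAdicRationals n).Countable := by
  refine (Set.countable_range fun z : ℕ × ℤ => ((z.2 / n ^ z.1 : ℝ) : UnitAddCircle)).mono ?_
  rintro _ ⟨k, q, rfl⟩
  exact ⟨(k, q), rfl⟩

section TimesN

variable (n : ℕ) [NeZero n]

lemma mem_nAdicRationals_of_pow_nsmul_eq_zero {k : ℕ} {t : UnitAddCircle} (ht : n ^ k • t = 0) :
    t ∈ nAdicRationals n := by
  have hpow : (n : ℝ) ^ k ≠ 0 := pow_ne_zero _ (NeZero.ne _)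
  rw [← coe_unitRep t, ← AddCircle.coe_nsmul, AddCircle.coe_eq_zero_iff] at ht
  obtain ⟨q, hq⟩ := ht
  refine ⟨k, q, ?_⟩
  rw [zsmul_one, nsmul_eq_mul, Nat.cast_pow] at hq
  rw [hq, mul_div_cancel_left₀ _ hpow, coe_unitRep]

lemma floor_mul_unitRep_lt (x : UnitAddCircle) : ⌊n * unitRep x⌋₊ < n := by
  have hn : (0 : ℝ) < n := Nat.cast_pos.2 (NeZero.pos n)
  rw [Nat.floor_lt (mul_nonneg hn.le (unitRep_mem_Ico x).1)]
  exact mul_lt_of_lt_one_right hn (unitRep_mem_Ico x).2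

/-- The first digit of `x` in base `n`. -/
noncomputable def leadingDigit (x : UnitAddCircle) : Fin n :=
  ⟨⌊n * unitRep x⌋₊, floor_mul_unitRep_lt n x⟩

/-- The point whose base `n` expansion is that of `y` preceded by the digit `j`. -/
noncomputable def consDigit (j : Fin n) (y : UnitAddCircle) : UnitAddCircle :=
  ((unitRep y + j) / n : ℝ)

lemma measurable_leadingDigit : Measurable (leadingDigit n) :=
  measurable_to_countable' fun j => by
    have hfloor : Measurable fun x => ⌊n * unitRep x⌋₊ :=
      Nat.measurable_floor.comp (measurable_unitRep.const_mul _)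
    convert hfloor (measurableSet_singleton (j : ℕ)) using 1
    ext x
    simp only [leadingDigit, Set.mem_preimage, Set.mem_singleton_iff, Fin.ext_iff]

lemma unitRep_nsmul_add_leadingDigit (x : UnitAddCircle) :
    unitRep (n • x) + leadingDigit n x = n * unitRep x := by
  rw [unitRep_nsmul, leadingDigit, natCast_floor_eq_intCast_floor
    (mul_nonneg n.cast_nonneg (unitRep_mem_Ico x).1), Int.fract_add_floor]

lemma nsmul_consDigit (j : Fin n) (y : UnitAddCircle) : n • consDigit n j y = y := by
  refine unitRep_injective ?_
  rw [consDigit, ← AddCircle.coe_nsmul, nsmul_eq_mul, mul_div_cancel₀ _ (NeZero.ne _), unitRep_coe,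
    Int.fract_add_natCast, Int.fract_eq_self.2 (unitRep_mem_Ico y)]

lemma leadingDigit_consDigit (j : Fin n) (y : UnitAddCircle) :
    leadingDigit n (consDigit n j y) = j := by
  have hsum := unitRep_nsmul_add_leadingDigit n (consDigit n j y)
  have hn : (0 : ℝ) < n := Nat.cast_pos.2 (NeZero.pos n)
  have hj : (j : ℝ) + 1 ≤ n := by exact_mod_cast j.2
  obtain ⟨hy0, hy1⟩ := unitRep_mem_Ico y
  have hrep : unitRep (consDigit n j y) = (unitRep y + j) / n := by
    rw [consDigit, unitRep_coe, Int.fract_eq_self.2]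
    exact ⟨by positivity, (div_lt_one hn).2 (by linarith)⟩
  rw [nsmul_consDigit, hrep, mul_div_cancel₀ _ hn.ne'] at hsum
  exact Fin.ext (Nat.cast_injective (add_left_cancel hsum))

/-- Multiplication by `n` on the circle as the one-sided shift on base `n` expansions. -/
noncomputable def timesBranchMap : FullBranchMap UnitAddCircle (Fin n) where
  map x := n • x
  digit := leadingDigit n
  branch := consDigit n
  measurable_map := (continuous_nsmul n).measurable
  measurable_digit := measurable_leadingDigit n
  measurable_branch j := AddCircle.measurable_mk'.comp
    ((measurable_unitRep.add_const _).div_const _)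
  branch_digit_map x := by
    rw [consDigit, unitRep_nsmul_add_leadingDigit, mul_div_cancel_left₀ _ (NeZero.ne _),
      coe_unitRep]
  map_branch := nsmul_consDigit n
  digit_branch := leadingDigit_consDigit n

lemma pow_mul_unitRep_sub_of_itinerary_eq {x y : UnitAddCircle}
    (hxy : itinerary (n • ·) (leadingDigit n) x = itinerary (n • ·) (leadingDigit n) y) (k : ℕ) :
    (n : ℝ) ^ k * (unitRep x - unitRep y) = unitRep (n ^ k • x) - unitRep (n ^ k • y) := by
  induction k with
  | zero => simp only [pow_zero, one_mul, one_smul]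
  | succ k ih =>
    have hdigit : leadingDigit n (n ^ k • x) = leadingDigit n (n ^ k • y) := by
      simpa only [itinerary, smul_iterate_apply] using congrFun hxy k
    rw [pow_succ', mul_assoc, ih, mul_sub, ← unitRep_nsmul_add_leadingDigit,
      ← unitRep_nsmul_add_leadingDigit, hdigit, add_sub_add_right_eq_sub, pow_succ', mul_smul,
      mul_smul]

variable {n}

lemma injective_itinerary_leadingDigit (hn : 2 ≤ n) :
    Function.Injective (itinerary (n • ·) (leadingDigit n)) := by
  intro x y hxy
  by_contra hne
  have hgap : 0 < |unitRep x - unitRep y| := abs_pos.2 (sub_ne_zero.2 (unitRep_injective.ne hne))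
  obtain ⟨k, hk⟩ := pow_unbounded_of_one_lt (1 / |unitRep x - unitRep y|)
    (show (1 : ℝ) < n by exact_mod_cast hn)
  have hlt : |unitRep (n ^ k • x) - unitRep (n ^ k • y)| < 1 := by
    obtain ⟨⟨hx0, hx1⟩, hy0, hy1⟩ :=
      And.intro (unitRep_mem_Ico (n ^ k • x)) (unitRep_mem_Ico (n ^ k • y))
    exact abs_sub_lt_iff.2 ⟨by linarith, by linarith⟩
  rw [← pow_mul_unitRep_sub_of_itinerary_eq n hxy, abs_mul, abs_of_nonneg (by positivity),
    ← lt_div_iff₀ hgap] at hlt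
  exact hlt.not_gt hk

theorem measure_eq_zero_of_nAdicRationals_separated (hn : 2 ≤ n) {ρ : Measure UnitAddCircle}
    [IsProbabilityMeasure ρ] (hρ : Ergodic (fun x : UnitAddCircle => n • x) ρ)
    (hent : 0 < ksEntropy (fun x : UnitAddCircle => n • x) ρ) {E : Set UnitAddCircle}
    (hE : MeasurableSet E) (hsep : ∀ x ∈ E, ∀ t ∈ nAdicRationals n, x + t ∈ E → t = 0) :
    ρ E = 0 := by
  refine (timesBranchMap n).measure_eq_zero_of_injOn_iterate
    (injective_itinerary_leadingDigit hn) hρ hent hE fun k x hx y hy hxy => ?_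
  have hpow : n ^ k • x = n ^ k • y := by
    rw [← smul_iterate_apply, ← smul_iterate_apply]
    exact hxy
  refine (sub_eq_zero.1 (hsep x hx (y - x) ?_ (by rwa [add_sub_cancel]))).symm
  exact mem_nAdicRationals_of_pow_nsmul_eq_zero n (k := k) (by rw [smul_sub, hpow, sub_self])

end TimesN

end Circle

theorem host_positive_entropy_components_implies_Nn_recurrent_general {n : ℕ} (hn : 2 ≤ n)
    {μ : Measure UnitAddCircle} {ν : Measure (Measure UnitAddCircle)} (hμ : μ ≪ ν.join)
    (hν : ∀ᵐ ρ ∂ν, IsProbabilityMeasure ρ ∧ Ergodic (fun x : UnitAddCircle => n • x) ρ ∧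
      0 < ksEntropy (fun x : UnitAddCircle => n • x) ρ) :
    NnRecurrent n μ := by
  intro B hB _
  have : NeZero n := ⟨by lia⟩
  refine ae_infinite_setOf_add_mem (countable_nAdicRationals n) (fun E hE hsep => hμ ?_) hB
  rw [Measure.join_apply hE, lintegral_congr_ae (g := 0), lintegral_zero_fun]
  filter_upwards [hν] with ρ ⟨hprob, herg, hent⟩
  exact measure_eq_zero_of_nAdicRationals_separated hn herg hent hE hsep

/-- Host: Let `n ≥ 2` and let `μ` be a `×n`-invariant Borel probability
measure on `𝕋` such that almost every ergodic component of `μ` with respect to `×n`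
(in its ergodic decomposition, here a measure `ν` on the space of measures) has
positive entropy.  Then `μ` is `N_n`-recurrent. -/
theorem host_positive_entropy_components_implies_Nn_recurrent
    (n : ℕ) (hn : 2 ≤ n)
    (μ : Measure UnitAddCircle) [IsProbabilityMeasure μ]
    (hinv : Measure.map (fun x : UnitAddCircle => n • x) μ = μ)
    (hdec : ∃ ν : Measure (Measure UnitAddCircle),
      (∀ᵐ ρ ∂ν, IsProbabilityMeasure ρ ∧
        Ergodic (fun x : UnitAddCircle => n • x) ρ ∧
        0 < ksEntropy (fun x : UnitAddCircle => n • x) ρ) ∧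
      ∀ A : Set UnitAddCircle, MeasurableSet A → μ A = ∫⁻ ρ, ρ A ∂ν) :
    NnRecurrent n μ := by
  obtain ⟨ν, hν, hμν⟩ := hdec
  have hμ : μ = ν.join := Measure.ext fun A hA => (hμν A hA).trans (Measure.join_apply hA).symm
  exact host_positive_entropy_components_implies_Nn_recurrent_general hn hμ.absolutelyContinuous hν
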